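/- arXiv:1904.00484 — 2 statements merged into one kernel-verified Lean document; each statement's English description precedes it below -/
import Mathlib

section
/- Let k : ℝ → ℝ satisfy the sector condition with constants 0 ≤ k₁ ≤ k₂, and define k̃(e) = k(e) − k₂·e. Then for all e_i, e_j ∈ ℝ: |k̃(e_i − e_j) + k̃(e_j)| ≤ (k₂ − k₁)|e_i| + (k₂ − k₁)|e_j|. -/
/-- A coupling function `k : ℝ → ℝ` satisfies the sector condition with constants
`0 ≤ k₁ ≤ k₂` if `k` is continuous and odd, `k(e)·e ≥ 0` for all `e`, and
`k₁|e| ≤ |k(e)| ≤ k₂|e|` for all `e`. -/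
def SectorCondition (k : ℝ → ℝ) (k₁ k₂ : ℝ) : Prop :=
  (0 ≤ k₁ ∧ k₁ ≤ k₂) ∧ Continuous k ∧ (∀ e : ℝ, k (-e) = - k e) ∧
    (∀ e : ℝ, 0 ≤ k e * e) ∧ (∀ e : ℝ, k₁ * |e| ≤ |k e| ∧ |k e| ≤ k₂ * |e|)

theorem sector_aux (k : ℝ → ℝ) (k₁ k₂ : ℝ) (hsec : SectorCondition k k₁ k₂) (e : ℝ) :
    (0 ≤ e ∧ -((k₂ - k₁) * e) ≤ k e - k₂ * e ∧ k e - k₂ * e ≤ 0) ∨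
    (e ≤ 0 ∧ 0 ≤ k e - k₂ * e ∧ k e - k₂ * e ≤ -((k₂ - k₁) * e)) := by
  obtain ⟨⟨h1, h2⟩, -, -, hs, hb⟩ := hsec
  obtain ⟨hl, hu⟩ := hb e
  have hse := hs e
  rcases lt_trichotomy e 0 with he | he | he
  · right
    have hk : k e ≤ 0 := by
      by_contra! h
      nlinarith
    rw [abs_of_neg he, abs_of_nonpos hk] at hl hu
    refine ⟨he.le, ?_, ?_⟩ <;> linarith
  · left
    subst he
    have : k 0 = 0 := by
      rw [abs_zero, mul_zero] at hu
      exact abs_nonpos_iff.mp hu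
    simp [this]
  · left
    have hk : 0 ≤ k e := by
      by_contra! h
      nlinarith
    rw [abs_of_pos he, abs_of_nonneg hk] at hl hu
    refine ⟨he.le, ?_, ?_⟩ <;> linarith

/-- Lemma 1: for `k̃(e) = k(e) − k₂ e`,
`|k̃(eᵢ − eⱼ) + k̃(eⱼ)| ≤ (k₂ − k₁)|eᵢ| + (k₂ − k₁)|eⱼ|`. -/
theorem sector_lemma (k : ℝ → ℝ) (k₁ k₂ : ℝ)
    (hsec : SectorCondition k k₁ k₂)
    (ktilde : ℝ → ℝ) (hkt : ∀ e : ℝ, ktilde e = k e - k₂ * e)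
    (ei ej : ℝ) :
    |ktilde (ei - ej) + ktilde ej| ≤ (k₂ - k₁) * |ei| + (k₂ - k₁) * |ej| := by
  have hd : 0 ≤ k₂ - k₁ := sub_nonneg.mpr hsec.1.2
  have hx := sector_aux k k₁ k₂ hsec (ei - ej)
  have hy := sector_aux k k₁ k₂ hsec ej
  rw [← hkt] at hx hy
  have a1 := mul_le_mul_of_nonneg_left (le_abs_self ei) hd
  have a2 := mul_le_mul_of_nonneg_left (neg_abs_le ei) hd
  have a3 := mul_le_mul_of_nonneg_left (le_abs_self ej) hd
  have a4 := mul_le_mul_of_nonneg_left (neg_abs_le ej) hd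
  have a5 := mul_nonneg hd (abs_nonneg ei)
  have a6 := mul_nonneg hd (abs_nonneg ej)
  rw [mul_sub] at hx
  rw [mul_neg] at a2 a4
  rw [abs_le]
  rcases hx with ⟨_, hx1, hx2⟩ | ⟨_, hx1, hx2⟩ <;>
  rcases hy with ⟨_, hy1, hy2⟩ | ⟨_, hy1, hy2⟩ <;>
  constructor <;> linarith
end

section
/- Let k : ℝ → ℝ satisfy the sector condition with constants 0 ≤ k₁ ≤ k₂. If e_i ≥ 0, e_j ≥ 0 and e_j − e_i < 0, then |−k₂·e_i + k(e_j) − k(e_j − e_i)| ≤ (k₂ − k₁)|e_i|. -/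
theorem sector_bounds_aux (k : ℝ → ℝ) (k₁ k₂ : ℝ) (hsec : SectorCondition k k₁ k₂)
    (e : ℝ) (he : 0 ≤ e) : k₁ * e ≤ k e ∧ k e ≤ k₂ * e := by
  obtain ⟨_, _, _, hs, hb⟩ := hsec
  obtain ⟨h1, h2⟩ := hb e
  rw [abs_of_nonneg he] at h1 h2
  have h0 : 0 ≤ k e := by
    rcases he.eq_or_lt with h | h
    · subst h
      have : |k 0| ≤ 0 := by simpa using h2
      rw [abs_nonpos_iff.mp this]
    · exact nonneg_of_mul_nonneg_left (hs e) h
  rw [abs_of_nonneg h0] at h1 h2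
  exact ⟨h1, h2⟩

/-- case `eᵢ ≥ 0`, `eⱼ ≥ 0`, `eⱼ − eᵢ < 0`. -/
theorem sector_case_two (k : ℝ → ℝ) (k₁ k₂ : ℝ)
    (hsec : SectorCondition k k₁ k₂)
    (ei ej : ℝ) (hei : 0 ≤ ei) (hej : 0 ≤ ej) (hij : ej - ei < 0) :
    |-(k₂ * ei) + k ej - k (ej - ei)| ≤ (k₂ - k₁) * |ei| := by
  obtain ⟨a1, a2⟩ := sector_bounds_aux k k₁ k₂ hsec ej hej
  obtain ⟨b1, b2⟩ := sector_bounds_aux k k₁ k₂ hsec (ei - ej) (by linarith)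
  have hodd : k (ei - ej) = - k (ej - ei) := by
    rw [← hsec.2.2.1 (ej - ei), neg_sub]
  have hk : k₁ * ei ≤ k₂ * ei := mul_le_mul_of_nonneg_right hsec.1.2 hei
  rw [abs_of_nonneg hei, abs_le]
  constructor <;> nlinarith
end
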